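/- arXiv:2507.01324 — 2 statements merged into one kernel-verified Lean document; each statement's English description precedes it below -/
import Mathlib

section
/- The aggregation operator H is a contraction with modulus α with respect to the maximum norm: for all vectors r, r' ∈ ℝ^𝒜, max_{x∈𝒜} |(Hr)(x) − (Hr')(x)| ≤ α · max_{y∈𝒜} |r_y − r'_y|. -/
/-!
The operator factors as `H = D T Φ`, where `T` is the Bellman operator and `D`, `Φ` average with
weights of total mass one, hence are nonexpansive in the maximum norm. A minimum over controls
moves by at most the largest movement of its entries, so `T` scales distances by at most the
discount factor, and so does the composition.
-/

section FiniteSums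

variable {ι R : Type*} [Ring R] [LinearOrder R] [IsOrderedRing R]

theorem abs_sum_mul_sub_sum_mul_le {s : Finset ι} {w a b : ι → R} {c : R}
    (h : ∀ i ∈ s, |a i - b i| ≤ c) :
    |∑ i ∈ s, w i * a i - ∑ i ∈ s, w i * b i| ≤ (∑ i ∈ s, |w i|) * c :=
  calc
    |∑ i ∈ s, w i * a i - ∑ i ∈ s, w i * b i| = |∑ i ∈ s, w i * (a i - b i)| := by
      simp only [mul_sub, Finset.sum_sub_distrib]
    _ ≤ ∑ i ∈ s, |w i * (a i - b i)| := Finset.abs_sum_le_sum_abs _ _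
    _ ≤ ∑ i ∈ s, |w i| * c := Finset.sum_le_sum fun i hi => by
      rw [abs_mul]
      exact mul_le_mul_of_nonneg_left (h i hi) (abs_nonneg (w i))
    _ = (∑ i ∈ s, |w i|) * c := (Finset.sum_mul _ _ _).symm

theorem abs_sum_mul_sub_sum_mul_le_of_sum_abs_le_one {s : Finset ι} {w a b : ι → R} {c : R}
    (hw : ∑ i ∈ s, |w i| ≤ 1) (hc : 0 ≤ c) (h : ∀ i ∈ s, |a i - b i| ≤ c) :
    |∑ i ∈ s, w i * a i - ∑ i ∈ s, w i * b i| ≤ c :=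
  (abs_sum_mul_sub_sum_mul_le h).trans (mul_le_of_le_one_left hc hw)

end FiniteSums

theorem sum_abs_eq_sum_of_nonneg {ι G : Type*} [AddCommGroup G] [LinearOrder G]
    [IsOrderedAddMonoid G] {s : Finset ι} {w : ι → G} (hw : ∀ i ∈ s, 0 ≤ w i) :
    ∑ i ∈ s, |w i| = ∑ i ∈ s, w i :=
  Finset.sum_congr rfl fun i hi => abs_of_nonneg (hw i hi)

theorem inf'_le_inf'_add {ι G : Type*} [Add G] [LinearOrder G] {s : Finset ι} (hs : s.Nonempty)
    {f g : ι → G} {c : G} (h : ∀ i ∈ s, f i ≤ g i + c) :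
    s.inf' hs f ≤ s.inf' hs g + c := by
  obtain ⟨i, hi, hmin⟩ := Finset.exists_mem_eq_inf' hs g
  rw [hmin]
  exact (Finset.inf'_le f hi).trans (h i hi)

theorem abs_inf'_sub_inf'_le {ι G : Type*} [AddCommGroup G] [LinearOrder G]
    [IsOrderedAddMonoid G] {s : Finset ι} (hs : s.Nonempty) {f g : ι → G} {c : G}
    (h : ∀ i ∈ s, |f i - g i| ≤ c) : |s.inf' hs f - s.inf' hs g| ≤ c :=
  abs_sub_le_iff.2
    ⟨sub_le_iff_le_add'.2 <| inf'_le_inf'_add hs fun i hi =>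
        sub_le_iff_le_add'.1 (abs_sub_le_iff.1 (h i hi)).1,
      sub_le_iff_le_add'.2 <| inf'_le_inf'_add hs fun i hi =>
        sub_le_iff_le_add'.1 (abs_sub_le_iff.1 (h i hi)).2⟩

section Aggregation

variable {S C A R : Type*} [Fintype S] [Fintype A] [Ring R] [LinearOrder R]

/-- The Bellman operator `T` of a finite-state decision problem, sending a cost-to-go vector `J`
to the optimal one-stage lookahead cost. The transition weights `p i u` are arbitrary, so that
substochastic rows (termination) are covered. -/
def bellmanOperator (U : S → Finset C) (hU : ∀ i, (U i).Nonempty) (α : R) (p g : S → C → S → R)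
    (J : S → R) (i : S) : R :=
  (U i).inf' (hU i) fun u => ∑ j, p i u j * (g i u j + α * J j)

/-- The aggregation operator `H = D T Φ`: interpolate `r` to all states with the aggregation
weights `φ`, apply the Bellman operator, and average with the disaggregation weights `d`. -/
def aggregationOperator (U : S → Finset C) (hU : ∀ i, (U i).Nonempty) (α : R)
    (p g : S → C → S → R) (d : A → S → R) (φ : S → A → R) (r : A → R) (x : A) : R :=
  ∑ i, d x i * bellmanOperator U hU α p g (fun j => ∑ y, φ j y * r y) i

variable [IsOrderedRing R] {U : S → Finset C} (hU : ∀ i, (U i).Nonempty) (α : R)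
  {p : S → C → S → R} (g : S → C → S → R)

theorem abs_bellmanOperator_sub_le (hp : ∀ i, ∀ u ∈ U i, ∑ j, |p i u j| ≤ 1)
    {J J' : S → R} {c : R} (hc : 0 ≤ c) (hJ : ∀ j, |J j - J' j| ≤ c) (i : S) :
    |bellmanOperator U hU α p g J i - bellmanOperator U hU α p g J' i| ≤ |α| * c := by
  refine abs_inf'_sub_inf'_le (hU i) fun u hu => ?_
  refine abs_sum_mul_sub_sum_mul_le_of_sum_abs_le_one (hp i u hu)
    (mul_nonneg (abs_nonneg α) hc) fun j _ => ?_
  rw [add_sub_add_left_eq_sub, ← mul_sub, abs_mul]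
  exact mul_le_mul_of_nonneg_left (hJ j) (abs_nonneg α)

theorem abs_aggregationOperator_sub_le (hp : ∀ i, ∀ u ∈ U i, ∑ j, |p i u j| ≤ 1)
    {d : A → S → R} (hd : ∀ x, ∑ i, |d x i| ≤ 1) {φ : S → A → R} (hφ : ∀ j, ∑ y, |φ j y| ≤ 1)
    {r r' : A → R} {c : R} (hr : ∀ y, |r y - r' y| ≤ c) (x : A) :
    |aggregationOperator U hU α p g d φ r x - aggregationOperator U hU α p g d φ r' x| ≤
      |α| * c := by
  have hc : 0 ≤ c := (abs_nonneg _).trans (hr x)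
  have interpolation_close (j : S) : |∑ y, φ j y * r y - ∑ y, φ j y * r' y| ≤ c :=
    abs_sum_mul_sub_sum_mul_le_of_sum_abs_le_one (hφ j) hc fun y _ => hr y
  exact abs_sum_mul_sub_sum_mul_le_of_sum_abs_le_one (hd x) (mul_nonneg (abs_nonneg α) hc)
    fun i _ => abs_bellmanOperator_sub_le hU α g hp hc interpolation_close i

theorem aggregation_operator_contraction_general [Nonempty A]
    (hp : ∀ i, ∀ u ∈ U i, ∑ j, |p i u j| ≤ 1)
    {d : A → S → R} (hd : ∀ x, ∑ i, |d x i| ≤ 1) {φ : S → A → R} (hφ : ∀ j, ∑ y, |φ j y| ≤ 1)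
    (r r' : A → R) :
    (Finset.univ.sup' Finset.univ_nonempty fun x =>
        |aggregationOperator U hU α p g d φ r x - aggregationOperator U hU α p g d φ r' x|) ≤
      |α| * Finset.univ.sup' Finset.univ_nonempty fun y => |r y - r' y| :=
  Finset.sup'_le _ _ fun x _ => abs_aggregationOperator_sub_le hU α g hp hd hφ
    (fun y => Finset.le_sup' (fun y => |r y - r' y|) (Finset.mem_univ y)) x

end Aggregation

/-- The aggregation operator `H` is a contraction of modulus `α` in the maximum norm:
`max_x |(Hr)(x) − (Hr')(x)| ≤ α · max_y |r_y − r'_y|`. -/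
theorem aggregation_operator_contraction
    (n : ℕ) [NeZero n] (C A : Type) [Fintype A] [Nonempty A]
    (U : Fin n → Finset C) (hU : ∀ i, (U i).Nonempty)
    (α : ℝ) (hα0 : 0 < α) (hα1 : α < 1)
    (p g : Fin n → C → Fin n → ℝ)
    (hp : ∀ i, ∀ u ∈ U i, ∀ j, 0 ≤ p i u j)
    (hp1 : ∀ i, ∀ u ∈ U i, ∑ j, p i u j = 1)
    (d : A → Fin n → ℝ) (hd : ∀ x i, 0 ≤ d x i) (hd1 : ∀ x, ∑ i, d x i = 1)
    (φ : Fin n → A → ℝ) (hφ : ∀ j y, 0 ≤ φ j y) (hφ1 : ∀ j, ∑ y, φ j y = 1)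
    (H : (A → ℝ) → A → ℝ)
    (hH : ∀ r x, H r x = ∑ i, d x i * (U i).inf' (hU i)
      (fun u => ∑ j, p i u j * (g i u j + α * ∑ y, φ j y * r y)))
    (r r' : A → ℝ) :
    (Finset.univ.sup' Finset.univ_nonempty fun x => |H r x - H r' x|) ≤
      α * Finset.univ.sup' Finset.univ_nonempty fun y => |r y - r' y| := by
  obtain rfl : H = aggregationOperator U hU α p g d φ := funext₂ hH
  simpa only [abs_of_pos hα0] using aggregation_operator_contraction_general hU α g
    (fun i u hu => ((sum_abs_eq_sum_of_nonneg fun j _ => hp i u hu j).trans (hp1 i u hu)).le)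
    (fun x => ((sum_abs_eq_sum_of_nonneg fun i _ => hd x i).trans (hd1 x)).le)
    (fun j => ((sum_abs_eq_sum_of_nonneg fun y _ => hφ j y).trans (hφ1 j)).le) r r'
end

section
/- Assume that for all x ∈ 𝒜 and i ∈ {1,…,n}, d_{xi} > 0 implies φ_{ix} > 0, and that for every x ∈ 𝒜 there exists at least one i with φ_{ix} > 0. Let ε = max_{x∈𝒜} max_{ i,j : φ_{ix}>0, φ_{jx}>0 } |J*(i) − J*(j)|, and define the vector r̲ ∈ ℝ^𝒜 by r̲_x = max_{ i : φ_{ix}>0 } J*(i) − ε/(1−α). Then (H r̲)(x) ≥ r̲_x for every x ∈ 𝒜. -/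
/-!
Write `T` for the Bellman operator of the original problem, `(Φ r) j = ∑ y, φ j y * r y`, and
`c = ε / (1 - α)`, so that `c - ε = α * c`. If `i` lies in the footprint of `x`, then
`J i - c ≤ r x ≤ J i + ε - c = J i - α * c`. Averaging the left bound over `φ` gives `J - c ≤ Φ r`,
hence `J - α * c ≤ T J - α * c = T (J - c) ≤ T (Φ r)`. Averaging this over `d x`, which is supported
in the footprint of `x`, and using the right bound gives `r x ≤ (H r) x`.
-/

section WeightedAverage

variable {ι R : Type*} [Semiring R] [PartialOrder R] [IsOrderedRing R]

theorem le_sum_mul_of_forall_pos {s : Finset ι} {w f : ι → R} {c : R}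
    (hw : ∀ i ∈ s, 0 ≤ w i) (hw1 : ∑ i ∈ s, w i = 1) (hf : ∀ i ∈ s, 0 < w i → c ≤ f i) :
    c ≤ ∑ i ∈ s, w i * f i :=
  calc
    c = ∑ i ∈ s, w i * c := by rw [← Finset.sum_mul, hw1, one_mul]
    _ ≤ ∑ i ∈ s, w i * f i := Finset.sum_le_sum fun i hi ↦ by
      rcases (hw i hi).eq_or_lt with hzero | hpos
      · simp [← hzero]
      · exact mul_le_mul_of_nonneg_left (hf i hi hpos) hpos.le

end WeightedAverage

section Bellman

variable {S C : Type*} [Fintype S]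

/-- The Bellman operator `T` of the discounted problem with control sets `U`, transition
probabilities `p`, stage costs `g` and discount factor `α`. -/
noncomputable def bellman (U : S → Finset C) (hU : ∀ i, (U i).Nonempty) (p g : S → C → S → ℝ)
    (α : ℝ) (J : S → ℝ) (i : S) : ℝ :=
  (U i).inf' (hU i) fun u ↦ ∑ j, p i u j * (g i u j + α * J j)

variable {U : S → Finset C} {hU : ∀ i, (U i).Nonempty} {p g : S → C → S → ℝ} {α : ℝ}

theorem bellman_mono (hα : 0 ≤ α) (hp : ∀ i, ∀ u ∈ U i, ∀ j, 0 ≤ p i u j) :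
    Monotone (bellman U hU p g α) := fun J J' hJ i ↦
  Finset.inf'_mono_fun fun u hu ↦ Finset.sum_le_sum fun j _ ↦ by
    have := hp i u hu j
    gcongr
    exact hJ j

theorem bellman_sub_const (hp1 : ∀ i, ∀ u ∈ U i, ∑ j, p i u j = 1) (J : S → ℝ) (c : ℝ) (i : S) :
    bellman U hU p g α (fun j ↦ J j - c) i = bellman U hU p g α J i - α * c := by
  have shift_cost : ∀ u ∈ U i, ∑ j, p i u j * (g i u j + α * (J j - c)) =
      ∑ j, p i u j * (g i u j + α * J j) - α * c := fun u hu ↦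
    calc
      _ = ∑ j, p i u j * (g i u j + α * J j) - (∑ j, p i u j) * (α * c) := by
        rw [Finset.sum_mul, ← Finset.sum_sub_distrib]
        exact Finset.sum_congr rfl fun j _ ↦ by ring
      _ = _ := by rw [hp1 i u hu, one_mul]
  unfold bellman
  rw [Finset.inf'_congr (hU i) rfl shift_cost]
  exact (map_finset_inf' (OrderIso.subRight (α * c)) (hU i) _).symm

end Bellman

section Aggregation

variable {S A : Type*} [Fintype S]

/-- The aggregation operator `H`: the Bellman operator between interpolation of `r` by the
aggregation probabilities `φ` and averaging by the disaggregation probabilities `d`. -/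
noncomputable def aggregateBellman {C : Type*} [Fintype A] (U : S → Finset C)
    (hU : ∀ i, (U i).Nonempty) (p g : S → C → S → ℝ) (α : ℝ) (d : A → S → ℝ) (φ : S → A → ℝ)
    (r : A → ℝ) (x : A) : ℝ :=
  ∑ i, d x i * bellman U hU p g α (fun j ↦ ∑ y, φ j y * r y) i

/-- The footprint of the aggregate state `x`: the states `i` with `φ_{ix} > 0`. -/
noncomputable def footprint (φ : S → A → ℝ) (x : A) : Finset S :=
  Finset.univ.filter fun i ↦ 0 < φ i x

/-- The largest value of `J` on the footprint of `x`. -/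
noncomputable def footprintMax (φ : S → A → ℝ) (hφ : ∀ x, (footprint φ x).Nonempty) (J : S → ℝ)
    (x : A) : ℝ :=
  (footprint φ x).sup' (hφ x) J

/-- The largest variation of `J` within a single footprint, the paper's `ε`. Triples outside a
footprint contribute `0`, which leaves the maximum of the nonnegative variations unchanged. -/
noncomputable def footprintOscillation [Fintype A] [Nonempty A] [Nonempty S] (φ : S → A → ℝ)
    (J : S → ℝ) : ℝ :=
  Finset.univ.sup' Finset.univ_nonempty fun q : A × S × S ↦
    if 0 < φ q.2.1 q.1 ∧ 0 < φ q.2.2 q.1 then |J q.2.1 - J q.2.2| else 0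

variable {φ : S → A → ℝ} {J : S → ℝ} {x : A} {i j : S}

theorem mem_footprint : i ∈ footprint φ x ↔ 0 < φ i x := by
  simp [footprint]

theorem sub_le_footprintOscillation [Fintype A] [Nonempty A] [Nonempty S] (hi : i ∈ footprint φ x)
    (hj : j ∈ footprint φ x) : J i - J j ≤ footprintOscillation φ J := by
  have variation_le := Finset.le_sup' (fun q : A × S × S ↦
    if 0 < φ q.2.1 q.1 ∧ 0 < φ q.2.2 q.1 then |J q.2.1 - J q.2.2| else 0)
    (Finset.mem_univ (x, i, j))
  rw [if_pos ⟨mem_footprint.1 hi, mem_footprint.1 hj⟩] at variation_le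
  exact (le_abs_self _).trans variation_le

variable {hne : ∀ x, (footprint φ x).Nonempty}

theorem le_footprintMax (hi : i ∈ footprint φ x) : J i ≤ footprintMax φ hne J x :=
  Finset.le_sup' J hi

theorem footprintMax_le_add {ε : ℝ} (hε : ∀ j ∈ footprint φ x, J j - J i ≤ ε) :
    footprintMax φ hne J x ≤ J i + ε :=
  Finset.sup'_le _ _ fun j hj ↦ sub_le_iff_le_add'.1 (hε j hj)

theorem sub_le_sum_mul_footprintMax_sub [Fintype A] (hφ : ∀ y, 0 ≤ φ j y)
    (hφ1 : ∑ y, φ j y = 1) (c : ℝ) : J j - c ≤ ∑ y, φ j y * (footprintMax φ hne J y - c) :=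
  le_sum_mul_of_forall_pos (fun y _ ↦ hφ y) hφ1 fun _ _ hpos ↦
    sub_le_sub_right (le_footprintMax (mem_footprint.2 hpos)) c

theorem sub_mul_le_bellman_footprintMax_sub [Fintype A] {C : Type*} {U : S → Finset C}
    {hU : ∀ i, (U i).Nonempty} {p g : S → C → S → ℝ} {α : ℝ} (hα : 0 ≤ α)
    (hp : ∀ i, ∀ u ∈ U i, ∀ j, 0 ≤ p i u j) (hp1 : ∀ i, ∀ u ∈ U i, ∑ j, p i u j = 1)
    (hφ : ∀ j y, 0 ≤ φ j y) (hφ1 : ∀ j, ∑ y, φ j y = 1)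
    (hJ : J i ≤ bellman U hU p g α J i) (c : ℝ) :
    J i - α * c ≤
      bellman U hU p g α (fun j ↦ ∑ y, φ j y * (footprintMax φ hne J y - c)) i :=
  calc
    J i - α * c ≤ bellman U hU p g α J i - α * c := sub_le_sub_right hJ _
    _ = bellman U hU p g α (fun j ↦ J j - c) i := (bellman_sub_const hp1 J c i).symm
    _ ≤ _ := bellman_mono hα hp (fun j ↦ sub_le_sum_mul_footprintMax_sub (hφ j) (hφ1 j) c) i

end Aggregation

theorem aggregation_lower_vector_is_subharmonic_general
    {S C A : Type*} [Fintype S] [Fintype A]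
    {U : S → Finset C} {hU : ∀ i, (U i).Nonempty}
    {α : ℝ} (hα0 : 0 ≤ α) (hα1 : α ≠ 1)
    {p g : S → C → S → ℝ}
    (hp : ∀ i, ∀ u ∈ U i, ∀ j, 0 ≤ p i u j)
    (hp1 : ∀ i, ∀ u ∈ U i, ∑ j, p i u j = 1)
    {d : A → S → ℝ} (hd : ∀ x i, 0 ≤ d x i) (hd1 : ∀ x, ∑ i, d x i = 1)
    {φ : S → A → ℝ} (hφ : ∀ j y, 0 ≤ φ j y) (hφ1 : ∀ j, ∑ y, φ j y = 1)
    {J : S → ℝ} (hJ : ∀ i, J i ≤ bellman U hU p g α J i)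
    (hcond : ∀ x i, 0 < d x i → 0 < φ i x)
    (hne : ∀ x, (footprint φ x).Nonempty)
    {ε : ℝ} (hε : ∀ x, ∀ i ∈ footprint φ x, ∀ j ∈ footprint φ x, J i - J j ≤ ε) (x : A) :
    footprintMax φ hne J x - ε / (1 - α) ≤
      aggregateBellman U hU p g α d φ (fun y ↦ footprintMax φ hne J y - ε / (1 - α)) x := by
  refine le_sum_mul_of_forall_pos (fun i _ ↦ hd x i) (hd1 x) fun i _ hdi ↦ ?_
  have hi : i ∈ footprint φ x := mem_footprint.2 (hcond x i hdi)
  have hα : 1 - α ≠ 0 := sub_ne_zero.2 hα1.symm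
  calc
    footprintMax φ hne J x - ε / (1 - α) ≤ J i + ε - ε / (1 - α) :=
      sub_le_sub_right (footprintMax_le_add fun j hj ↦ hε x j hj i hi) _
    _ = J i - α * (ε / (1 - α)) := by field_simp; ring
    _ ≤ _ := sub_mul_le_bellman_footprintMax_sub hα0 hp hp1 hφ hφ1 (hJ i) _

/-- If `d_{xi} > 0 ⟹ φ_{ix} > 0` and each aggregate state has nonempty footprint,
then the vector `r̲` with `r̲_x = max_{i : φ_{ix}>0} J*(i) − ε/(1−α)` satisfies
`(H r̲)(x) ≥ r̲_x` for every aggregate state `x`. -/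
theorem aggregation_lower_vector_is_subharmonic
    (n : ℕ) [NeZero n] (C A : Type) [Fintype A] [Nonempty A]
    (U : Fin n → Finset C) (hU : ∀ i, (U i).Nonempty)
    (α : ℝ) (hα0 : 0 < α) (hα1 : α < 1)
    (p g : Fin n → C → Fin n → ℝ)
    (hp : ∀ i, ∀ u ∈ U i, ∀ j, 0 ≤ p i u j)
    (hp1 : ∀ i, ∀ u ∈ U i, ∑ j, p i u j = 1)
    (d : A → Fin n → ℝ) (hd : ∀ x i, 0 ≤ d x i) (hd1 : ∀ x, ∑ i, d x i = 1)
    (φ : Fin n → A → ℝ) (hφ : ∀ j y, 0 ≤ φ j y) (hφ1 : ∀ j, ∑ y, φ j y = 1)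
    -- `J*` is the optimal cost vector of the original problem
    (Jstar : Fin n → ℝ)
    (hJstar : ∀ i, Jstar i = (U i).inf' (hU i)
      (fun u => ∑ j, p i u j * (g i u j + α * Jstar j)))
    -- the aggregation operator `H`
    (H : (A → ℝ) → A → ℝ)
    (hH : ∀ r x, H r x = ∑ i, d x i * (U i).inf' (hU i)
      (fun u => ∑ j, p i u j * (g i u j + α * ∑ y, φ j y * r y)))
    -- the support condition
    (hcond : ∀ x i, 0 < d x i → 0 < φ i x)
    -- every aggregate state has at least one state in its footprint
    (hsupp : ∀ x : A, ∃ i, 0 < φ i x)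
    -- `ε = max_{x∈𝒜} max_{i,j : φ_{ix}>0, φ_{jx}>0} |J*(i) − J*(j)|`
    (ε : ℝ)
    (hε : ε = Finset.univ.sup' Finset.univ_nonempty
      (fun q : A × Fin n × Fin n =>
        if 0 < φ q.2.1 q.1 ∧ 0 < φ q.2.2 q.1 then |Jstar q.2.1 - Jstar q.2.2| else 0))
    -- `r̲_x = max_{i : φ_{ix}>0} J*(i) − ε/(1−α)`
    (rlow : A → ℝ)
    (hrlow : ∀ x, rlow x =
      (Finset.univ.filter fun i => 0 < φ i x).sup'
        (by obtain ⟨i, hi⟩ := hsupp x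
            exact ⟨i, Finset.mem_filter.2 ⟨Finset.mem_univ i, hi⟩⟩) Jstar
      - ε / (1 - α)) :
    ∀ x, rlow x ≤ H rlow x := by
  have hne (x : A) : (footprint φ x).Nonempty := (hsupp x).imp fun _ ↦ mem_footprint.2
  obtain rfl : rlow = fun x ↦ footprintMax φ hne Jstar x - ε / (1 - α) := funext hrlow
  intro x
  rw [hH]
  exact aggregation_lower_vector_is_subharmonic_general hα0.le hα1.ne hp hp1 hd hd1 hφ hφ1
    (fun i ↦ (hJstar i).le) hcond hne
    (fun _ _ hi _ hj ↦ hε ▸ sub_le_footprintOscillation hi hj) x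
end
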